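/- Suppose ε_ħ = ħ^{3/2}. Then for the periodized coherent state ψ_ħ with ξ₀ ≠ 0, for every primitive rank-1 sublattice Λ ⊆ ℤ² and every smooth compactly supported a : 𝕋² × ℝ → ℂ: (i) if ⟨ξ₀, v_Λ⟩ ≠ 0, then W_{Λ,ħ}(a) → 0 as ħ → 0⁺; (ii) if ⟨ξ₀, v_Λ⟩ = 0, then W_{Λ,ħ}(a) → ∫_{ℝ²} |φ̂(ξ)|² I_Λ(a)(x₀, 2π H_Λ(ξ)) dξ as ħ → 0⁺, where I_Λ(a)(x, η) := L_Λ^{−1} ∫₀^{L_Λ} a(x + t v_Λ^⊥/L_Λ, η) dt. -/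

import Mathlib

open MeasureTheory Filter Real
open scoped Topology

noncomputable section

/-- The Euclidean inner product on `ℝ²`. -/
def dot2 (v w : ℝ × ℝ) : ℝ := v.1 * w.1 + v.2 * w.2

/-- The Euclidean norm on `ℝ²`. -/
def nrm2 (v : ℝ × ℝ) : ℝ := Real.sqrt (dot2 v v)

/-- The canonical embedding `ℤ² ↪ ℝ²`. -/
def toR2 (m : ℤ × ℤ) : ℝ × ℝ := ((m.1 : ℝ), (m.2 : ℝ))

/-- Rotation of an integer vector by `+π/2`. -/
def perpZ (v : ℤ × ℤ) : ℤ × ℤ := (-v.2, v.1)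

/-- `v` generates a primitive rank-1 sublattice `Λ = ℤ v` of `ℤ²`. -/
def Primitive (v : ℤ × ℤ) : Prop := Int.gcd v.1 v.2 = 1

/-- `L_Λ = ‖v_Λ‖`. -/
def LL (v : ℤ × ℤ) : ℝ := nrm2 (toR2 v)

/-- `H_Λ(ξ) = ⟨ξ, v_Λ⟩ / L_Λ`, where `v` is the generator `v_Λ` of `Λ`. -/
def HH (v : ℤ × ℤ) (ξ : ℝ × ℝ) : ℝ := dot2 ξ (toR2 v) / LL v

/-- Integral over a fundamental domain of the torus `𝕋² = ℝ²/ℤ²`. -/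
def torusInt (f : ℝ × ℝ → ℂ) : ℂ :=
  ∫ x in Set.Icc ((0, 0) : ℝ × ℝ) ((1, 1) : ℝ × ℝ), f x

/-- `e^{it}`. -/
def expI (t : ℝ) : ℂ := Complex.exp (Complex.I * (t : ℂ))

/-- The `j`-th Fourier coefficient (in `x`) of `a : 𝕋² × ℝ → ℂ`:
`â(j, η) = ∫_{𝕋²} a(x, η) e^{-2πi j·x} dx`. -/
def fcoef (a : ℝ × ℝ → ℝ → ℂ) (j : ℤ × ℤ) (η : ℝ) : ℂ :=
  torusInt fun x => a x η * expI (-(2 * π * dot2 (toR2 j) x))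

/-- The Fourier transform on `ℝ²`: `φ̂(ξ) = ∫_{ℝ²} φ(x) e^{-2πi x·ξ} dx`. -/
def FT (φ : ℝ × ℝ → ℂ) (ξ : ℝ × ℝ) : ℂ :=
  ∫ x : ℝ × ℝ, φ x * expI (-(2 * π * dot2 x ξ))

/-- The `m`-th Fourier coefficient of the periodized coherent state:
`ψ̂_hb(m) = hb^{1/2} e^{-2πi (m - ξ₀/hb)·x₀} φ̂(hb^{1/2}(m - ξ₀/hb))`. -/
def psiF (φ : ℝ × ℝ → ℂ) (x₀ ξ₀ : ℝ × ℝ) (hb : ℝ) (m : ℤ × ℤ) : ℂ :=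
  (Real.sqrt hb : ℂ) * expI (-(2 * π * dot2 (toR2 m - hb⁻¹ • ξ₀) x₀)) *
    FT φ (Real.sqrt hb • (toR2 m - hb⁻¹ • ξ₀))

/-- The two-microlocal quantity
`W_{Λ,hb}(a) = Σ_{m ∈ ℤ²} Σ_{j ∈ Λ} conj(ψ̂_hb(m)) ψ̂_hb(m−j) â(j, 2π hb² ε_hb⁻¹ H_Λ(m))`,
for the periodized coherent state, where `Λ = ℤ w` and `e = ε_hb`. -/
def Wcs (φ : ℝ × ℝ → ℂ) (x₀ ξ₀ : ℝ × ℝ) (w : ℤ × ℤ) (a : ℝ × ℝ → ℝ → ℂ)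
    (hb e : ℝ) : ℂ :=
  ∑' m : ℤ × ℤ, ∑' c : ℤ,
    (starRingEnd ℂ) (psiF φ x₀ ξ₀ hb m) * psiF φ x₀ ξ₀ hb (m - c • w) *
      fcoef a (c • w) (2 * π * hb ^ 2 / e * HH w (toR2 m))

/-- The average of `a` along the periodic flow in the direction `v_Λ^⊥/L_Λ`:
`I_Λ(a)(x, η) = L_Λ⁻¹ ∫₀^{L_Λ} a(x + t v_Λ^⊥/L_Λ, η) dt`. -/
def IΛ (w : ℤ × ℤ) (a : ℝ × ℝ → ℝ → ℂ) (x : ℝ × ℝ) (η : ℝ) : ℂ :=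
  ((LL w : ℝ) : ℂ)⁻¹ * ∫ t in (0:ℝ)..(LL w), a (x + (t / LL w) • toR2 (perpZ w)) η

theorem torusInt_eq (f : ℝ × ℝ → ℂ) (hf : Continuous f) :
    torusInt f = ∫ s in (0:ℝ)..1, ∫ t in (0:ℝ)..1, f (s, t) := by
  unfold torusInt
  rw [← Set.Icc_prod_Icc, Measure.volume_eq_prod, setIntegral_prod]
  · rw [intervalIntegral.integral_of_le zero_le_one, integral_Icc_eq_integral_Ioc]
    refine setIntegral_congr_fun measurableSet_Ioc fun s _ => ?_
    rw [intervalIntegral.integral_of_le zero_le_one, integral_Icc_eq_integral_Ioc]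
  · exact hf.continuousOn.integrableOn_compact (isCompact_Icc.prod isCompact_Icc)

def IsPer (f : ℝ × ℝ → ℂ) : Prop := ∀ (x : ℝ × ℝ) (j : ℤ × ℤ), f (x + toR2 j) = f x

theorem torusInt_shift (f : ℝ × ℝ → ℂ) (hf : Continuous f) (hp : IsPer f) (y : ℝ × ℝ) :
    torusInt (fun x => f (x + y)) = torusInt f := by
  rw [torusInt_eq _ (by fun_prop), torusInt_eq _ hf]
  have h1 : ∀ s : ℝ, ∫ t in (0:ℝ)..1, f ((s, t) + y) = ∫ t in (0:ℝ)..1, f (s + y.1, t) := by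
    intro s
    have hper : Function.Periodic (fun t : ℝ => f (s + y.1, t)) 1 := by
      intro t
      have := hp (s + y.1, t) (0, 1)
      simpa [toR2] using this
    have h2 := hper.intervalIntegral_add_eq y.2 0
    rw [zero_add] at h2
    rw [← h2]
    have h3 := intervalIntegral.integral_comp_add_right (a := 0) (b := 1)
      (fun t : ℝ => f (s + y.1, t)) y.2
    rw [zero_add, add_comm 1 y.2] at h3
    exact h3
  simp_rw [h1]
  have hper : Function.Periodic (fun s : ℝ => ∫ t in (0:ℝ)..1, f (s, t)) 1 := by
    intro s
    simp only
    congr 1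
    ext t
    have := hp (s, t) (1, 0)
    simpa [toR2] using this
  have h2 := hper.intervalIntegral_add_eq y.1 0
  rw [zero_add] at h2
  rw [← h2]
  have h3 := intervalIntegral.integral_comp_add_right (a := 0) (b := 1)
      (fun s : ℝ => ∫ t in (0:ℝ)..1, f (s, t)) y.1
  rw [zero_add, add_comm 1 y.1] at h3
  exact h3

theorem torusInt_const (c : ℂ) : torusInt (fun _ => c) = c := by
  rw [torusInt_eq _ continuous_const]
  simp

theorem toR2_add (m n : ℤ × ℤ) : toR2 (m + n) = toR2 m + toR2 n := by
  simp [toR2]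

theorem toR2_zsmul (c : ℤ) (n : ℤ × ℤ) : toR2 (c • n) = (c : ℝ) • toR2 n := by
  simp [toR2]

theorem torusInt_unimod (f : ℝ × ℝ → ℂ) (hf : Continuous f) (hp : IsPer f) (u v : ℤ × ℤ)
    (hdet : u.1 * v.2 - u.2 * v.1 = 1) :
    torusInt (fun z => f (z.1 • toR2 u + z.2 • toR2 v)) = torusInt f := by
  have hK : IsCompact (Set.Icc ((0, 0) : ℝ × ℝ) ((1, 1) : ℝ × ℝ)) := isCompact_Icc
  have hdet' : (u.1 : ℝ) * v.2 - u.2 * v.1 = 1 := by exact_mod_cast hdet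
  have swap : torusInt (fun x => torusInt (fun z => f (x + (z.1 • toR2 u + z.2 • toR2 v)))) =
      torusInt (fun z => torusInt (fun x => f (x + (z.1 • toR2 u + z.2 • toR2 v)))) := by
    unfold torusInt
    apply integral_integral_swap
    rw [Measure.prod_restrict]
    apply ContinuousOn.integrableOn_compact (hK.prod hK)
    apply Continuous.continuousOn
    unfold Function.uncurry
    fun_prop
  have e1 : ∀ x : ℝ × ℝ, torusInt (fun z => f (x + (z.1 • toR2 u + z.2 • toR2 v))) =
      torusInt (fun z => f (z.1 • toR2 u + z.2 • toR2 v)) := by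
    intro x
    have := torusInt_shift (fun z => f (z.1 • toR2 u + z.2 • toR2 v)) (by fun_prop) ?_
      (x.1 * v.2 - x.2 * v.1, - x.1 * u.2 + x.2 * u.1)
    · rw [← this]
      congr 1
      ext z
      congr 1
      simp only [toR2]
      ext
      · simp
        linear_combination (-x.1) * hdet'
      · simp
        linear_combination (-x.2) * hdet'
    · intro z j
      have := hp (z.1 • toR2 u + z.2 • toR2 v) (j.1 • u + j.2 • v)
      simp only
      rw [← this, toR2_add, toR2_zsmul, toR2_zsmul]
      congr 1
      ext <;> simp [toR2] <;> ring
  have e2 : ∀ z : ℝ × ℝ, torusInt (fun x => f (x + (z.1 • toR2 u + z.2 • toR2 v))) =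
      torusInt f := fun z => torusInt_shift f hf hp _
  simp_rw [e1, e2, torusInt_const] at swap
  exact swap

theorem expI_add (s t : ℝ) : expI (s + t) = expI s * expI t := by
  simp [expI, mul_add, Complex.exp_add]

theorem norm_expI (t : ℝ) : ‖expI t‖ = 1 := by
  unfold expI; rw [mul_comm]; exact Complex.norm_exp_ofReal_mul_I t

theorem continuous_expI : Continuous expI := by unfold expI; fun_prop

theorem expI_two_pi_int (n : ℤ) : expI (2 * π * n) = 1 := by
  unfold expI
  rw [← Complex.exp_int_mul_two_pi_mul_I n]
  congr 1; push_cast; ring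

theorem expI_zero : expI 0 = 1 := by simp [expI]

/-- formula for the Fourier coefficients along `ℤ w`. -/
theorem fcoef_formula (a : ℝ × ℝ → ℝ → ℂ) (η : ℝ) (hc : Continuous fun x => a x η)
    (hp : ∀ (x : ℝ × ℝ) (j : ℤ × ℤ), a (x + toR2 j) η = a x η) (w u : ℤ × ℤ)
    (hu : u.1 * w.1 + u.2 * w.2 = 1) (x₀ : ℝ × ℝ) (c : ℤ) :
    fcoef a (c • w) η * expI (2 * π * (c * dot2 (toR2 w) x₀)) =
      torusInt (fun z => a (x₀ + (z.1 • toR2 u + z.2 • toR2 (perpZ w))) η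
        * expI (-(2 * π * (c * z.1)))) := by
  have hu' : (u.1 : ℝ) * w.1 + u.2 * w.2 = 1 := by exact_mod_cast hu
  have hcE := continuous_expI
  have hF : Continuous (fun x => a x η * expI (-(2 * π * dot2 (toR2 (c • w)) x))) := by
    unfold dot2
    fun_prop
  have hPF : IsPer (fun x => a x η * expI (-(2 * π * dot2 (toR2 (c • w)) x))) := by
    intro x j
    simp only [hp]
    congr 1
    rw [show -(2 * π * dot2 (toR2 (c • w)) (x + toR2 j)) = -(2 * π * dot2 (toR2 (c • w)) x)
      + 2 * π * ((-(c * (w.1 * j.1 + w.2 * j.2)) : ℤ) : ℝ) by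
        simp [dot2, toR2]; ring, expI_add, expI_two_pi_int, mul_one]
  have hd : u.1 * (perpZ w).2 - u.2 * (perpZ w).1 = 1 := by simp [perpZ]; linarith
  have e1 := torusInt_shift _ hF hPF x₀
  have e2 := torusInt_unimod (fun x => a (x + x₀) η *
    expI (-(2 * π * dot2 (toR2 (c • w)) (x + x₀)))) (by unfold dot2; fun_prop)
    (by
      intro x j
      have := hPF (x + x₀) j
      simp only at this ⊢
      rw [← this, add_right_comm]) u (perpZ w) hd
  unfold fcoef
  rw [← e1, ← e2]
  unfold torusInt
  rw [← integral_mul_const]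
  congr 1
  ext z
  simp only
  rw [mul_assoc, ← expI_add, add_comm x₀]
  congr 2
  simp [dot2, toR2, perpZ]
  linear_combination (-2 * π * c * z.1) * hu'
theorem torusInt_eq' (f : ℝ × ℝ → ℂ) (hf : Continuous f) :
    torusInt f = ∫ t in (0:ℝ)..1, ∫ s in (0:ℝ)..1, f (s, t) := by
  rw [torusInt_eq f hf]
  simp only [intervalIntegral.integral_of_le (zero_le_one (α := ℝ))]
  apply integral_integral_swap
  rw [Measure.prod_restrict]
  have : IntegrableOn f (Set.Icc (0:ℝ) 1 ×ˢ Set.Icc (0:ℝ) 1) (volume.prod volume) :=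
    hf.continuousOn.integrableOn_compact (isCompact_Icc.prod isCompact_Icc)
  exact this.mono_set (Set.prod_mono Set.Ioc_subset_Icc_self Set.Ioc_subset_Icc_self)

theorem hasDerivAt_expI (c : ℝ) (s : ℝ) :
    HasDerivAt (fun s : ℝ => expI (-(2 * π * (c * s))))
      (-(2 * π * Complex.I * c) * expI (-(2 * π * (c * s)))) s := by
  unfold expI
  have h1 : HasDerivAt (fun s : ℝ => ((-(2 * π * (c * s)) : ℝ) : ℂ)) ((-(2 * π * c) : ℝ) : ℂ) s := by
    apply HasDerivAt.ofReal_comp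
    have := ((hasDerivAt_id s).const_mul (-(2 * π * c)))
    simp only [id, mul_one] at this
    convert! this using 1
    ext x; ring
  have := (h1.const_mul Complex.I).cexp
  convert! this using 1
  push_cast; ring

theorem ibp_step (f f' : ℝ → ℂ) (hf : ∀ s, HasDerivAt f (f' s) s) (hf' : Continuous f')
    (h01 : f 1 = f 0) (c : ℤ) :
    (2 * π * Complex.I * c) * (∫ s in (0:ℝ)..1, f s * expI (-(2 * π * (c * s)))) =
      ∫ s in (0:ℝ)..1, f' s * expI (-(2 * π * (c * s))) := by
  have hE := continuous_expI
  have := intervalIntegral.integral_mul_deriv_eq_deriv_mul (a := 0) (b := 1) (u := f) (u' := f')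
    (v := fun s : ℝ => expI (-(2 * π * (c * s))))
    (v' := fun s : ℝ => (-(2 * π * Complex.I * c) * expI (-(2 * π * (c * s)))))
    (fun x _ => hf x) (fun x _ => by simpa using hasDerivAt_expI (c : ℝ) x)
    (hf'.intervalIntegrable _ _) (Continuous.intervalIntegrable (by fun_prop) _ _)
  have h1 : expI (-(2 * π * ((c:ℝ) * 1))) = 1 := by
    have := expI_two_pi_int (-c)
    rw [← this]; congr 1; push_cast; ring
  have h0 : expI (-(2 * π * ((c:ℝ) * 0))) = 1 := by
    simp [expI]
  simp only [h1, h0, h01, sub_self, zero_sub] at this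
  rw [← neg_eq_iff_eq_neg] at this
  rw [← this, ← intervalIntegral.integral_const_mul, ← intervalIntegral.integral_neg]
  congr 1; ext s; ring

theorem ibp_two (f f' f'' : ℝ → ℂ) (hf : ∀ s, HasDerivAt f (f' s) s)
    (hf' : ∀ s, HasDerivAt f' (f'' s) s) (hf'' : Continuous f'')
    (h01 : f 1 = f 0) (h01' : f' 1 = f' 0) (C : ℝ) (hC : ∀ s ∈ Set.Icc (0:ℝ) 1, ‖f'' s‖ ≤ C)
    (c : ℤ) (hc : c ≠ 0) :
    ‖∫ s in (0:ℝ)..1, f s * expI (-(2 * π * (c * s)))‖ ≤ C * (1 / (c:ℝ) ^ 2) := by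
  have hcf' : Continuous f' := continuous_iff_continuousAt.2 fun s => (hf' s).continuousAt
  have e1 := ibp_step f f' hf hcf' h01 c
  have e2 := ibp_step f' f'' hf' hf'' h01' c
  rw [← e1, ← mul_assoc] at e2
  have hb : ‖∫ s in (0:ℝ)..1, f'' s * expI (-(2 * π * (c * s)))‖ ≤ C * |1 - 0| := by
    apply intervalIntegral.norm_integral_le_of_norm_le_const
    intro x hx
    rw [norm_mul, norm_expI, mul_one]
    rw [Set.uIoc_of_le zero_le_one] at hx
    exact hC x ⟨hx.1.le, hx.2⟩
  rw [← e2, norm_mul] at hb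
  have hn : ‖(2 * π * Complex.I * c) * (2 * π * Complex.I * c)‖ = (2 * π) ^ 2 * (c : ℝ) ^ 2 := by
    simp [abs_of_pos Real.pi_pos]
    rw [← sq_abs (c:ℝ)]; ring
  rw [hn] at hb
  have hcpos : (0:ℝ) < (c:ℝ) ^ 2 := by positivity
  rw [mul_one_div, le_div_iff₀ hcpos]
  have hpi : (1:ℝ) ≤ (2 * π) ^ 2 := by nlinarith [Real.pi_gt_three]
  set N := ‖∫ s in (0:ℝ)..1, f s * expI (-(2 * π * (c * s)))‖
  have hN : 0 ≤ N := norm_nonneg _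
  simp at hb
  have : 0 ≤ (c:ℝ)^2 * N := by positivity
  nlinarith

theorem fcoef_decay (a : ℝ × ℝ → ℝ → ℂ)
    (ha_smooth : ContDiff ℝ (⊤ : ℕ∞) fun p : (ℝ × ℝ) × ℝ => a p.1 p.2)
    (ha_per : ∀ (x : ℝ × ℝ) (η : ℝ) (j : ℤ × ℤ), a (x + toR2 j) η = a x η)
    (ha_supp : ∃ R : ℝ, ∀ (x : ℝ × ℝ) (η : ℝ), R ≤ |η| → a x η = 0) (w u : ℤ × ℤ)
    (hu : u.1 * w.1 + u.2 * w.2 = 1) :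
    ∃ B : ℤ → ℝ, Summable B ∧ ∀ c η, ‖fcoef a (c • w) η‖ ≤ B c := by
  obtain ⟨R, hR⟩ := ha_supp
  have hE := continuous_expI
  set A : (ℝ × ℝ) × ℝ → ℂ := fun p => a p.1 p.2 with hA
  set U : (ℝ × ℝ) × ℝ := (toR2 u, 0) with hU
  set A1 : (ℝ × ℝ) × ℝ → ℂ := fun p => fderiv ℝ A p U with hA1
  set A2 : (ℝ × ℝ) × ℝ → ℂ := fun p => fderiv ℝ A1 p U with hA2
  have cA1 : ContDiff ℝ (⊤ : ℕ∞) A1 :=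
    (ha_smooth.fderiv_right (m := (⊤ : ℕ∞)) (by simp)).clm_apply contDiff_const
  have cA2 : ContDiff ℝ (⊤ : ℕ∞) A2 :=
    (cA1.fderiv_right (m := (⊤ : ℕ∞)) (by simp)).clm_apply contDiff_const
  have dA : Differentiable ℝ A := ha_smooth.differentiable (by simp)
  have dA1 : Differentiable ℝ A1 := cA1.differentiable (by simp)
  set γ : ℝ → ℝ → ℝ → (ℝ × ℝ) × ℝ := fun t η s => (s • toR2 u + t • toR2 (perpZ w), η) with hγ
  have dγ : ∀ t η s, HasDerivAt (γ t η) U s := by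
    intro t η s
    apply HasDerivAt.prodMk _ (hasDerivAt_const _ _)
    have := ((hasDerivAt_id s).smul_const (toR2 u)).add_const (t • toR2 (perpZ w))
    simpa using this
  have hK : IsCompact ((Set.Icc (0:ℝ) 1 ×ˢ Set.Icc (0:ℝ) 1) ×ˢ Set.Icc (-R) R) :=
    (isCompact_Icc.prod isCompact_Icc).prod isCompact_Icc
  obtain ⟨C2, hC2⟩ := hK.exists_bound_of_continuousOn
    (f := fun q : (ℝ × ℝ) × ℝ => A2 (γ q.1.2 q.2 q.1.1))
    (Continuous.continuousOn (cA2.continuous.comp (by fun_prop)))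
  obtain ⟨C0, hC0⟩ := hK.exists_bound_of_continuousOn
    (f := fun q : (ℝ × ℝ) × ℝ => A (γ q.1.2 q.2 q.1.1))
    (Continuous.continuousOn (ha_smooth.continuous.comp (by fun_prop)))
  refine ⟨fun c => |C2| * (1 / (c:ℝ) ^ 2) + if c = 0 then |C0| else 0, ?_, ?_⟩
  · apply Summable.add
    · exact (Real.summable_one_div_int_pow.2 (by norm_num)).mul_left _
    · apply summable_of_ne_finset_zero (s := {0})
      intro b hb
      simp at hb
      simp [hb]
  intro c η
  have hnn : 0 ≤ |C2| * (1 / (c:ℝ) ^ 2) + if c = 0 then |C0| else 0 := by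
    split_ifs <;> positivity
  by_cases hη : R ≤ |η|
  · have : fcoef a (c • w) η = 0 := by
      simp [fcoef, torusInt, hR _ η hη]
    rw [this, norm_zero]; exact hnn
  push Not at hη
  have hηI : η ∈ Set.Icc (-R) R := abs_le.1 hη.le
  have hcA : Continuous A := ha_smooth.continuous
  have hcx : Continuous fun x => a x η := hcA.comp (f := fun x => (x, η)) (by fun_prop)
  have hform := fcoef_formula a η hcx (fun x j => ha_per x η j) w u hu 0 c
  have hz : expI (2 * π * (c * dot2 (toR2 w) 0)) = 1 := by simp [dot2, expI]
  rw [hz, mul_one] at hform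
  rw [hform, torusInt_eq' _ (by fun_prop)]
  simp only [zero_add]
  have key : ‖∫ t in (0:ℝ)..1, ∫ s in (0:ℝ)..1, a (s • toR2 u + t • toR2 (perpZ w)) η *
      expI (-(2 * π * (c * s)))‖ ≤
      (|C2| * (1 / (c:ℝ) ^ 2) + if c = 0 then |C0| else 0) * |1 - 0| := by
    apply intervalIntegral.norm_integral_le_of_norm_le_const
    intro t ht
    rw [Set.uIoc_of_le zero_le_one] at ht
    have htI : t ∈ Set.Icc (0:ℝ) 1 := ⟨ht.1.le, ht.2⟩
    by_cases hc : c = 0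
    · have : ‖∫ s in (0:ℝ)..1, a (s • toR2 u + t • toR2 (perpZ w)) η *
        expI (-(2 * π * (c * s)))‖ ≤ |C0| * |1 - 0| := by
        apply intervalIntegral.norm_integral_le_of_norm_le_const
        intro s hs
        rw [Set.uIoc_of_le zero_le_one] at hs
        have hsI : s ∈ Set.Icc (0:ℝ) 1 := ⟨hs.1.le, hs.2⟩
        rw [norm_mul, norm_expI, mul_one]
        exact (hC0 ((s, t), η) ⟨⟨hsI, htI⟩, hηI⟩).trans (le_abs_self _)
      simp [hc] at this ⊢
      exact this
    · have hd0 : ∀ s, HasDerivAt (fun s => A (γ t η s)) (A1 (γ t η s)) s := fun s =>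
        (dA (γ t η s)).hasFDerivAt.comp_hasDerivAt s (dγ t η s)
      have hd1 : ∀ s, HasDerivAt (fun s => A1 (γ t η s)) (A2 (γ t η s)) s := fun s =>
        (dA1 (γ t η s)).hasFDerivAt.comp_hasDerivAt s (dγ t η s)
      have hper : ∀ s, A (γ t η (s + 1)) = A (γ t η s) := by
        intro s
        have := ha_per (s • toR2 u + t • toR2 (perpZ w)) η u
        simp only [hA, hγ]
        rw [← this, add_smul, one_smul]
        congr 1; abel
      have := ibp_two (fun s => A (γ t η s)) (fun s => A1 (γ t η s)) (fun s => A2 (γ t η s))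
        hd0 hd1 (cA2.continuous.comp (by fun_prop)) (by simpa using hper 0) (by
          have h1 := HasDerivAt.comp_add_const (0:ℝ) 1 (f := fun s => A (γ t η s))
            (by rw [zero_add]; exact hd0 1)
          simp only [hper] at h1
          exact h1.unique (hd0 0)) |C2|
          (fun s hs => (hC2 ((s, t), η) ⟨⟨hs, htI⟩, hηI⟩).trans (le_abs_self _)) c hc
      simp only [hc, if_false, add_zero]
      exact this
  simpa using key

theorem hasSum_IΛ (a : ℝ × ℝ → ℝ → ℂ) (η : ℝ) (hc : Continuous fun x => a x η)
    (hp : ∀ (x : ℝ × ℝ) (j : ℤ × ℤ), a (x + toR2 j) η = a x η) (w u : ℤ × ℤ)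
    (hu : u.1 * w.1 + u.2 * w.2 = 1) (x₀ : ℝ × ℝ)
    (hs : Summable fun c : ℤ => ‖fcoef a (c • w) η‖) :
    HasSum (fun c : ℤ => fcoef a (c • w) η * expI (2 * π * (c * dot2 (toR2 w) x₀)))
      (IΛ w a x₀ η) := by
  have hE := continuous_expI
  have hL : LL w ≠ 0 := by
    unfold LL nrm2
    have : 0 < dot2 (toR2 w) (toR2 w) := by
      rcases eq_or_ne w.1 0 with h | h
      · have h2 : w.2 ≠ 0 := by
          intro h2; simp [h, h2] at hu
        have : (w.2 : ℝ) ≠ 0 := by exact_mod_cast h2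
        simp only [dot2, toR2]
        nlinarith [sq_nonneg (w.1 : ℝ), sq_nonneg (w.2 : ℝ), pow_pos (abs_pos.2 this) 2, sq_abs (w.1:ℝ), sq_abs (w.2:ℝ)]
      · have : (w.1 : ℝ) ≠ 0 := by exact_mod_cast h
        simp only [dot2, toR2]
        nlinarith [sq_nonneg (w.1 : ℝ), sq_nonneg (w.2 : ℝ), pow_pos (abs_pos.2 this) 2, sq_abs (w.1:ℝ), sq_abs (w.2:ℝ)]
    exact (Real.sqrt_pos.2 this).ne'
  set b : ℝ → ℂ := fun s => ∫ t in (0:ℝ)..1, a (x₀ + (s • toR2 u + t • toR2 (perpZ w))) η with hb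
  have hbc : Continuous b := by
    apply intervalIntegral.continuous_parametric_intervalIntegral_of_continuous'
    unfold Function.uncurry
    fun_prop
  have hbp : Function.Periodic b 1 := by
    intro s
    simp only [hb]
    congr 1; ext t
    rw [← hp (x₀ + (s • toR2 u + t • toR2 (perpZ w))) u, add_smul, one_smul]
    congr 1; abel
  have hI : IΛ w a x₀ η = b 0 := by
    unfold IΛ
    have := intervalIntegral.integral_comp_div (a := 0) (b := LL w)
      (fun t => a (x₀ + t • toR2 (perpZ w)) η) hL
    rw [this]
    simp [hb, hL]
  have : Fact ((0:ℝ) < 1) := ⟨zero_lt_one⟩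
  let g : C(AddCircle (1:ℝ), ℂ) := ⟨hbp.lift, by
    exact hbc.quotient_lift _⟩
  have hg : ∀ c : ℤ, fourierCoeff g c =
      fcoef a (c • w) η * expI (2 * π * (c * dot2 (toR2 w) x₀)) := by
    intro c
    rw [fcoef_formula a η hc hp w u hu x₀ c, torusInt_eq _ (by fun_prop),
      fourierCoeff_eq_intervalIntegral _ _ 0]
    simp only [zero_add, div_one, one_smul]
    congr 1
    ext s
    rw [intervalIntegral.integral_mul_const, mul_comm, smul_eq_mul]
    congr 1
    rw [fourier_coe_apply]
    unfold expI
    congr 1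
    push_cast
    ring
  have hsum : Summable (fourierCoeff g) := by
    apply Summable.of_norm
    simp_rw [hg, norm_mul, norm_expI, mul_one]
    exact hs
  have := has_pointwise_sum_fourier_series_of_summable hsum ((0:ℝ) : AddCircle (1:ℝ))
  rw [hI]
  convert! this using 1
  ext c
  simp [hg]
/-- the bilinear form `dot2`, bundled. -/
def dotL : (ℝ × ℝ) →L[ℝ] (ℝ × ℝ) →L[ℝ] ℝ :=
  (ContinuousLinearMap.mul ℝ ℝ).bilinearComp (.fst ℝ ℝ ℝ) (.fst ℝ ℝ ℝ) +
  (ContinuousLinearMap.mul ℝ ℝ).bilinearComp (.snd ℝ ℝ ℝ) (.snd ℝ ℝ ℝ)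

theorem dotL_apply (v w : ℝ × ℝ) : dotL v w = dot2 v w := by
  simp [dotL, dot2]

theorem FT_eq (φ : ℝ × ℝ → ℂ) :
    FT φ = VectorFourier.fourierIntegral Real.fourierChar volume dotL.toLinearMap₁₂ φ := by
  ext ξ
  unfold FT VectorFourier.fourierIntegral
  congr 1
  ext v
  rw [Circle.smul_def, Real.fourierChar_apply, smul_eq_mul, mul_comm]
  congr 1
  have : dotL.toLinearMap₁₂ v ξ = dot2 v ξ := dotL_apply v ξ
  rw [this]
  unfold expI
  congr 1
  push_cast
  ring

theorem hasCompactSupport_of (φ : ℝ × ℝ → ℂ)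
    (hφ_supp : ∀ x : ℝ × ℝ, φ x ≠ 0 → |x.1| < 1/2 ∧ |x.2| < 1/2) : HasCompactSupport φ := by
  apply HasCompactSupport.of_support_subset_isCompact (isCompact_closedBall (0 : ℝ × ℝ) (1/2))
  intro x hx
  have := hφ_supp x hx
  rw [mem_closedBall_zero_iff, Prod.norm_def]
  exact max_le this.1.le this.2.le

theorem FT_continuous (φ : ℝ × ℝ → ℂ) (hφ : Continuous φ) (hs : HasCompactSupport φ) :
    Continuous (FT φ) := by
  rw [FT_eq]
  apply VectorFourier.fourierIntegral_continuous Real.continuous_fourierChar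
  · exact dotL.continuous₂
  · exact hφ.integrable_of_hasCompactSupport hs

theorem FT_decay (φ : ℝ × ℝ → ℂ) (hφ : ContDiff ℝ (⊤ : ℕ∞) φ) (hs : HasCompactSupport φ) :
    ∃ C : ℝ, 0 ≤ C ∧ ∀ ξ, ‖FT φ ξ‖ * (1 + ‖ξ‖) ^ 3 ≤ C := by
  have hint : ∀ (k n : ℕ), (k : ℕ∞) ≤ (⊤ : ℕ∞) → (n : ℕ∞) ≤ (⊤ : ℕ∞) →
      Integrable (fun v ↦ ‖v‖ ^ k * ‖iteratedFDeriv ℝ n φ v‖) (volume : Measure (ℝ × ℝ)) := by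
    intro k n _ _
    have hc : Continuous (iteratedFDeriv ℝ n φ) :=
      hφ.continuous_iteratedFDeriv (by exact_mod_cast le_top)
    apply Continuous.integrable_of_hasCompactSupport (by fun_prop)
    exact ((hs.iteratedFDeriv n).norm).mul_left
  have key : ∀ (n : ℕ) (v : ℝ × ℝ), ∃ C : ℝ, ∀ ξ, |dot2 v ξ| ^ n * ‖FT φ ξ‖ ≤ C := by
    intro n v
    refine ⟨‖v‖ ^ n * (2 * π * ‖dotL‖) ^ 0 * (2 * (0 : ℕ) + 2) ^ n *
        ∑ p ∈ Finset.range (0 + 1) ×ˢ Finset.range (n + 1),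
          ∫ v, ‖v‖ ^ p.1 * ‖iteratedFDeriv ℝ p.2 φ v‖, fun ξ => ?_⟩
    have := VectorFourier.pow_mul_norm_iteratedFDeriv_fourierIntegral_le dotL hφ hint
      (k := 0) (n := n) le_top le_top v ξ
    rw [norm_iteratedFDeriv_zero, ← FT_eq, dotL_apply] at this
    exact this
  obtain ⟨C0, h0⟩ := key 0 0
  obtain ⟨C1, h1⟩ := key 3 (1, 0)
  obtain ⟨C2, h2⟩ := key 3 (0, 1)
  have hC : ∀ ξ, ‖FT φ ξ‖ * (1 + ‖ξ‖) ^ 3 ≤ 8 * (C0 + C1 + C2) := by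
    intro ξ
    have h0 := h0 ξ
    have h1 := h1 ξ
    have h2 := h2 ξ
    simp only [dot2, one_mul, zero_mul, add_zero, zero_add, pow_zero] at h0 h1 h2
    have hN := norm_nonneg (FT φ ξ)
    have hx := abs_nonneg ξ.1
    have hy := abs_nonneg ξ.2
    have hb : (1 + ‖ξ‖) ^ 3 ≤ 8 * (1 + |ξ.1| ^ 3 + |ξ.2| ^ 3) := by
      have aux : ∀ x : ℝ, 0 ≤ x → (1 + x) ^ 3 ≤ 8 * (1 + x ^ 3) := by
        intro x hx
        nlinarith [mul_nonneg (by linarith : (0:ℝ) ≤ 1 + x) (sq_nonneg (1 - x)),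
          pow_nonneg hx 3]
      rw [Prod.norm_def, Real.norm_eq_abs, Real.norm_eq_abs]
      have p1 : 0 ≤ |ξ.1| ^ 3 := by positivity
      have p2 : 0 ≤ |ξ.2| ^ 3 := by positivity
      rcases max_choice |ξ.1| |ξ.2| with h | h <;> rw [h]
      · linarith [aux _ hx]
      · linarith [aux _ hy]
    calc ‖FT φ ξ‖ * (1 + ‖ξ‖) ^ 3 ≤ ‖FT φ ξ‖ * (8 * (1 + |ξ.1| ^ 3 + |ξ.2| ^ 3)) := by gcongr
      _ ≤ _ := by linarith
  exact ⟨_, le_trans (by positivity) (hC 0), hC⟩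

def fl (x : ℝ × ℝ) : ℤ × ℤ := (⌊x.1⌋, ⌊x.2⌋)

theorem measurable_fl : Measurable fl :=
  (Int.measurable_floor.comp measurable_fst).prodMk (Int.measurable_floor.comp measurable_snd)

theorem tsum_eq_integral_fl (V : ℤ × ℤ → ℂ) (hV : Integrable (fun x => V (fl x))) :
    ∑' m, V m = ∫ x, V (fl x) := by
  have hm : AEMeasurable fl (volume : Measure (ℝ × ℝ)) := measurable_fl.aemeasurable
  have hVm : AEStronglyMeasurable V (Measure.map fl volume) :=
    (Measurable.of_discrete (f := V)).aestronglyMeasurable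
  have hi : Integrable V (Measure.map fl volume) := (integrable_map_measure hVm hm).2 hV
  rw [← integral_map hm hVm, integral_countable hi]
  congr 1
  ext m
  have : (Measure.map fl volume).real {m} = 1 := by
    rw [measureReal_def, Measure.map_apply measurable_fl (measurableSet_singleton m)]
    have : fl ⁻¹' {m} = Set.Ico (m.1:ℝ) (m.1 + 1) ×ˢ Set.Ico (m.2:ℝ) (m.2 + 1) := by
      ext x
      simp [fl, Prod.ext_iff, Int.floor_eq_iff]
    rw [this, Measure.volume_eq_prod, Measure.prod_prod]
    simp
  rw [this, one_smul]

theorem tsum_eq_integral_scaled (V : ℤ × ℤ → ℂ) (r : ℝ) (hr : 0 < r) (y : ℝ × ℝ)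
    (hV : Integrable (fun x : ℝ × ℝ => V (fl (r⁻¹ • x + y)))) :
    ∑' m, V m = ∫ x : ℝ × ℝ, (((r ^ 2)⁻¹ : ℝ) : ℂ) * V (fl (r⁻¹ • x + y)) := by
  have h1 : Integrable (fun x : ℝ × ℝ => V (fl (x + y))) :=
    (integrable_comp_smul_iff volume (fun x : ℝ × ℝ => V (fl (x + y))) (inv_ne_zero hr.ne')).1 hV
  have h2 : Integrable (fun x : ℝ × ℝ => V (fl x)) := by
    simpa using h1.comp_add_right (-y)
  rw [tsum_eq_integral_fl V h2, integral_const_mul,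
    Measure.integral_comp_smul volume (fun x : ℝ × ℝ => V (fl (x + y))) r⁻¹,
    integral_add_right_eq_self (fun x : ℝ × ℝ => V (fl x)) y]
  have : Module.finrank ℝ (ℝ × ℝ) = 2 := by simp
  rw [this, abs_of_pos (by positivity), Complex.real_smul, ← mul_assoc, ← Complex.ofReal_mul]
  rw [show (r ^ 2)⁻¹ * (r⁻¹ ^ 2)⁻¹ = 1 by field_simp]
  simp
/-- the summand over `c`, after rescaling. -/
def Gs (φ : ℝ × ℝ → ℂ) (x₀ : ℝ × ℝ) (w : ℤ × ℤ) (a : ℝ × ℝ → ℝ → ℂ) (r : ℝ) (ξ : ℝ × ℝ)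
    (η : ℝ) (c : ℤ) : ℂ :=
  (starRingEnd ℂ) (FT φ ξ) * FT φ (ξ - (r * c) • toR2 w) *
    (fcoef a (c • w) η * expI (2 * π * (c * dot2 (toR2 w) x₀)))

/-- The rescaled lattice point. -/
def pt (ξ₀ : ℝ × ℝ) (hb : ℝ) (m : ℤ × ℤ) : ℝ × ℝ := Real.sqrt hb • (toR2 m - hb⁻¹ • ξ₀)

theorem conj_expI (t : ℝ) : (starRingEnd ℂ) (expI t) = expI (-t) := by
  unfold expI
  rw [← Complex.exp_conj]
  simp

theorem term_eq (φ : ℝ × ℝ → ℂ) (x₀ ξ₀ : ℝ × ℝ) (w : ℤ × ℤ) (a : ℝ × ℝ → ℝ → ℂ)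
    (hb : ℝ) (hpos : 0 < hb) (m : ℤ × ℤ) (c : ℤ) (η : ℝ) :
    (starRingEnd ℂ) (psiF φ x₀ ξ₀ hb m) * psiF φ x₀ ξ₀ hb (m - c • w) *
      fcoef a (c • w) η = (hb : ℂ) * Gs φ x₀ w a (Real.sqrt hb) (pt ξ₀ hb m) η c := by
  have hsq : (hb : ℂ) = (Real.sqrt hb : ℂ) * (Real.sqrt hb : ℂ) := by
    rw [← Complex.ofReal_mul, Real.mul_self_sqrt hpos.le]
  have hpt : Real.sqrt hb • (toR2 (m - c • w) - hb⁻¹ • ξ₀) =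
      pt ξ₀ hb m - (Real.sqrt hb * c) • toR2 w := by
    unfold pt
    ext <;> simp [toR2] <;> ring
  have hexp : expI (2 * π * (c * dot2 (toR2 w) x₀)) =
      expI (- -(2 * π * dot2 (toR2 m - hb⁻¹ • ξ₀) x₀)) *
      expI (-(2 * π * dot2 (toR2 (m - c • w) - hb⁻¹ • ξ₀) x₀)) := by
    rw [← expI_add]
    congr 1
    simp [dot2, toR2]
    ring
  unfold psiF Gs
  rw [hpt, hsq, hexp]
  simp only [map_mul, Complex.conj_ofReal, conj_expI]
  unfold pt
  ring

theorem eta_eq (ξ₀ : ℝ × ℝ) (w : ℤ × ℤ) (hb : ℝ) (hpos : 0 < hb) (m : ℤ × ℤ) :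
    2 * π * hb ^ 2 / (hb ^ ((3:ℝ)/2)) * HH w (toR2 m) =
      2 * π * HH w (pt ξ₀ hb m) + 2 * π * HH w ξ₀ * (Real.sqrt hb)⁻¹ := by
  have hs : 0 < Real.sqrt hb := Real.sqrt_pos.2 hpos
  have h1 : hb ^ ((3:ℝ)/2) = Real.sqrt hb ^ 3 := by
    rw [Real.sqrt_eq_rpow, ← Real.rpow_natCast, ← Real.rpow_mul hpos.le]
    norm_num
  have h2 : hb = Real.sqrt hb ^ 2 := (Real.sq_sqrt hpos.le).symm
  unfold HH pt dot2
  rw [h1]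
  set s := Real.sqrt hb
  rw [h2]
  simp
  field_simp
  ring

theorem Wcs_eq (φ : ℝ × ℝ → ℂ) (x₀ ξ₀ : ℝ × ℝ) (w : ℤ × ℤ) (a : ℝ × ℝ → ℝ → ℂ)
    (hb : ℝ) (hpos : 0 < hb) :
    Wcs φ x₀ ξ₀ w a hb (hb ^ ((3:ℝ)/2)) =
      ∑' m : ℤ × ℤ, (hb : ℂ) * ∑' c : ℤ, Gs φ x₀ w a (Real.sqrt hb) (pt ξ₀ hb m)
        (2 * π * HH w (pt ξ₀ hb m) + 2 * π * HH w ξ₀ * (Real.sqrt hb)⁻¹) c := by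
  unfold Wcs
  congr 1
  ext m
  rw [← tsum_mul_left]
  congr 1
  ext c
  rw [term_eq φ x₀ ξ₀ w a hb hpos, eta_eq ξ₀ w hb hpos]

/-- the nearby rescaled lattice point. -/
def zt (ξ₀ : ℝ × ℝ) (hb : ℝ) (ξ : ℝ × ℝ) : ℝ × ℝ :=
  pt ξ₀ hb (fl ((Real.sqrt hb)⁻¹ • ξ + hb⁻¹ • ξ₀))

theorem zt_near (ξ₀ : ℝ × ℝ) (hb : ℝ) (hpos : 0 < hb) (ξ : ℝ × ℝ) :
    ‖zt ξ₀ hb ξ - ξ‖ ≤ Real.sqrt hb := by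
  have hs : 0 < Real.sqrt hb := Real.sqrt_pos.2 hpos
  have aux : ∀ x y : ℝ, |Real.sqrt hb * ((⌊(Real.sqrt hb)⁻¹ * x + hb⁻¹ * y⌋ : ℝ) - hb⁻¹ * y) - x|
      ≤ Real.sqrt hb := by
    intro x y
    set s := Real.sqrt hb
    set q := s⁻¹ * x + hb⁻¹ * y with hq
    have h1 := Int.floor_le q
    have h2 := (Int.lt_floor_add_one q).le
    have : s * ((⌊q⌋ : ℝ) - hb⁻¹ * y) - x = s * (⌊q⌋ - q) := by
      rw [hq]; field_simp; ring
    rw [this, abs_mul, abs_of_pos hs]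
    have : |(⌊q⌋ : ℝ) - q| ≤ 1 := by rw [abs_le]; constructor <;> linarith
    nlinarith
  rw [Prod.norm_def]
  apply max_le
  · simpa [zt, pt, toR2, fl] using aux ξ.1 ξ₀.1
  · simpa [zt, pt, toR2, fl] using aux ξ.2 ξ₀.2

theorem sqrt_tendsto : Tendsto Real.sqrt (𝓝[>] (0:ℝ)) (𝓝 0) := by
  have := Real.continuous_sqrt.tendsto 0
  rw [Real.sqrt_zero] at this
  exact this.mono_left nhdsWithin_le_nhds

theorem zt_tendsto (ξ₀ ξ : ℝ × ℝ) :
    Tendsto (fun hb => zt ξ₀ hb ξ) (𝓝[>] (0:ℝ)) (𝓝 ξ) := by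
  rw [tendsto_iff_norm_sub_tendsto_zero]
  refine squeeze_zero' (Eventually.of_forall fun _ => norm_nonneg _) ?_ sqrt_tendsto
  filter_upwards [self_mem_nhdsWithin] with hb hpos
  exact zt_near ξ₀ hb hpos ξ

theorem HH_continuous (w : ℤ × ℤ) : Continuous (HH w) := by
  unfold HH dot2; fun_prop

/-- common dominated convergence argument -/
theorem Wcs_tendsto (φ : ℝ × ℝ → ℂ) (x₀ ξ₀ : ℝ × ℝ) (w : ℤ × ℤ) (a : ℝ × ℝ → ℝ → ℂ)
    (C : ℝ) (hC0 : 0 ≤ C) (hC : ∀ ξ, ‖FT φ ξ‖ * (1 + ‖ξ‖) ^ 3 ≤ C)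
    (B : ℤ → ℝ) (hB : Summable B) (hBa : ∀ c η, ‖fcoef a (c • w) η‖ ≤ B c)
    (g : ℝ × ℝ → ℂ)
    (hlim : ∀ ξ, Tendsto (fun hb => ∑' c : ℤ, Gs φ x₀ w a (Real.sqrt hb) (zt ξ₀ hb ξ)
        (2 * π * HH w (zt ξ₀ hb ξ) + 2 * π * HH w ξ₀ * (Real.sqrt hb)⁻¹) c)
        (𝓝[>] (0:ℝ)) (𝓝 (g ξ))) :
    Tendsto (fun hb => Wcs φ x₀ ξ₀ w a hb (hb ^ ((3:ℝ)/2))) (𝓝[>] (0:ℝ)) (𝓝 (∫ ξ, g ξ)) := by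
  have hB0 : ∀ c, 0 ≤ B c := fun c => (norm_nonneg _).trans (hBa c 0)
  have hFb : ∀ ξ, ‖FT φ ξ‖ ≤ C := fun ξ => by
    refine le_trans ?_ (hC ξ)
    apply le_mul_of_one_le_right (norm_nonneg _)
    exact one_le_pow₀ (by linarith [norm_nonneg ξ])
  have hG : ∀ r ξ η, ‖∑' c, Gs φ x₀ w a r ξ η c‖ ≤ ‖FT φ ξ‖ * C * ∑' c, B c := by
    intro r ξ η
    apply tsum_of_norm_bounded (hB.hasSum.mul_left _)
    intro c
    unfold Gs
    rw [norm_mul, norm_mul, norm_mul, norm_expI, mul_one, RCLike.norm_conj]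
    gcongr
    · exact hFb _
    · exact hBa c η
  set F : ℝ → ℝ × ℝ → ℂ := fun hb ξ => ∑' c : ℤ, Gs φ x₀ w a (Real.sqrt hb) (zt ξ₀ hb ξ)
        (2 * π * HH w (zt ξ₀ hb ξ) + 2 * π * HH w ξ₀ * (Real.sqrt hb)⁻¹) c with hF
  set bound : ℝ × ℝ → ℝ := fun ξ => (8 * C * C * ∑' c, B c) * (1 + ‖ξ‖) ^ (-(3:ℝ)) with hbound
  have hbi : Integrable bound := by
    apply Integrable.const_mul
    apply integrable_one_add_norm
    simp; norm_num
  have hle : ∀ hb, 0 < hb → hb ≤ 1 → ∀ ξ, ‖F hb ξ‖ ≤ bound ξ := by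
    intro hb hpos h1 ξ
    have hnear := (zt_near ξ₀ hb hpos ξ).trans (Real.sqrt_le_one.2 h1)
    refine (hG _ _ _).trans ?_
    have hS : 0 ≤ ∑' c, B c := tsum_nonneg hB0
    have hp : 0 < 1 + ‖ξ‖ := by positivity
    have : ‖FT φ (zt ξ₀ hb ξ)‖ ≤ 8 * C * (1 + ‖ξ‖) ^ (-(3:ℝ)) := by
      rw [Real.rpow_neg hp.le, ← div_eq_mul_inv, le_div_iff₀ (by positivity)]
      rw [show (3:ℝ) = ((3:ℕ):ℝ) by norm_num, Real.rpow_natCast]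
      have h2 : 1 + ‖ξ‖ ≤ 2 * (1 + ‖zt ξ₀ hb ξ‖) := by
        have := norm_sub_norm_le ξ (zt ξ₀ hb ξ)
        rw [norm_sub_rev] at this
        linarith [norm_nonneg (zt ξ₀ hb ξ)]
      calc ‖FT φ (zt ξ₀ hb ξ)‖ * (1 + ‖ξ‖) ^ 3
          ≤ ‖FT φ (zt ξ₀ hb ξ)‖ * (2 * (1 + ‖zt ξ₀ hb ξ‖)) ^ 3 := by gcongr
        _ = 8 * (‖FT φ (zt ξ₀ hb ξ)‖ * (1 + ‖zt ξ₀ hb ξ‖) ^ 3) := by ring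
        _ ≤ 8 * C := by linarith [hC (zt ξ₀ hb ξ)]
    calc ‖FT φ (zt ξ₀ hb ξ)‖ * C * ∑' c, B c
        ≤ (8 * C * (1 + ‖ξ‖) ^ (-(3:ℝ))) * C * ∑' c, B c := by gcongr
      _ = bound ξ := by simp only [hbound]; ring
  have hmeas : ∀ hb, Measurable (F hb) := by
    intro hb
    have h1 : Measurable (fun ξ : ℝ × ℝ => fl ((Real.sqrt hb)⁻¹ • ξ + hb⁻¹ • ξ₀)) :=
      measurable_fl.comp (by fun_prop)
    exact (Measurable.of_discrete (f := fun m : ℤ × ℤ =>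
      ∑' c : ℤ, Gs φ x₀ w a (Real.sqrt hb) (pt ξ₀ hb m)
        (2 * π * HH w (pt ξ₀ hb m) + 2 * π * HH w ξ₀ * (Real.sqrt hb)⁻¹) c)).comp h1
  have hev : ∀ᶠ hb in 𝓝[>] (0:ℝ), 0 < hb ∧ hb ≤ 1 := by
    filter_upwards [Ioc_mem_nhdsGT (zero_lt_one (α := ℝ))] with hb h using h
  have hlimI : Tendsto (fun hb => ∫ ξ, F hb ξ) (𝓝[>] (0:ℝ)) (𝓝 (∫ ξ, g ξ)) := by
    apply tendsto_integral_filter_of_dominated_convergence bound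
    · exact Eventually.of_forall fun hb => (hmeas hb).aestronglyMeasurable
    · filter_upwards [hev] with hb h
      exact ae_of_all _ (hle hb h.1 h.2)
    · exact hbi
    · exact ae_of_all _ hlim
  refine hlimI.congr' ?_
  filter_upwards [hev] with hb h
  have hFi : Integrable (F hb) :=
    hbi.mono' (hmeas hb).aestronglyMeasurable (ae_of_all _ (hle hb h.1 h.2))
  rw [Wcs_eq φ x₀ ξ₀ w a hb h.1]
  rw [tsum_eq_integral_scaled _ (Real.sqrt hb) (Real.sqrt_pos.2 h.1) (hb⁻¹ • ξ₀)
    (hFi.const_mul (hb : ℂ))]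
  congr 1
  ext ξ
  rw [Real.sq_sqrt h.1.le, ← mul_assoc, ← Complex.ofReal_mul, inv_mul_cancel₀ h.1.ne']
  simp only [Complex.ofReal_one, one_mul]
  rfl

/-- coherent states, critical perturbations `ε_hb = hb^{3/2}`. -/
theorem stmt5
    (φ : ℝ × ℝ → ℂ) (hφ_smooth : ContDiff ℝ (⊤ : ℕ∞) φ)
    (hφ_supp : ∀ x : ℝ × ℝ, φ x ≠ 0 → |x.1| < 1/2 ∧ |x.2| < 1/2)
    (hφ_norm : ∫ x : ℝ × ℝ, ‖φ x‖ ^ 2 = 1)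
    (x₀ ξ₀ : ℝ × ℝ) (hξ₀ : ξ₀ ≠ 0)
    (a : ℝ × ℝ → ℝ → ℂ)
    (ha_smooth : ContDiff ℝ (⊤ : ℕ∞) fun p : (ℝ × ℝ) × ℝ => a p.1 p.2)
    (ha_per : ∀ (x : ℝ × ℝ) (η : ℝ) (j : ℤ × ℤ), a (x + toR2 j) η = a x η)
    (ha_supp : ∃ R : ℝ, ∀ (x : ℝ × ℝ) (η : ℝ), R ≤ |η| → a x η = 0) :
    ∀ w : ℤ × ℤ, Primitive w →
      (dot2 ξ₀ (toR2 w) ≠ 0 →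
        Tendsto (fun hb => Wcs φ x₀ ξ₀ w a hb (hb ^ ((3:ℝ)/2)))
          (𝓝[>] (0:ℝ)) (𝓝 0))
      ∧
      (dot2 ξ₀ (toR2 w) = 0 →
        Tendsto (fun hb => Wcs φ x₀ ξ₀ w a hb (hb ^ ((3:ℝ)/2)))
          (𝓝[>] (0:ℝ))
          (𝓝 (∫ ξ : ℝ × ℝ, ((‖FT φ ξ‖ ^ 2 : ℝ) : ℂ) * IΛ w a x₀ (2 * π * HH w ξ)))) := by
  intro w hw
  obtain ⟨u, hu⟩ : ∃ u : ℤ × ℤ, u.1 * w.1 + u.2 * w.2 = 1 := by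
    refine ⟨(Int.gcdA w.1 w.2, Int.gcdB w.1 w.2), ?_⟩
    have h := Int.gcd_eq_gcd_ab w.1 w.2
    have hw' : Int.gcd w.1 w.2 = 1 := hw
    rw [hw'] at h
    push_cast at h
    simp only
    linarith
  have hcs := hasCompactSupport_of φ hφ_supp
  have hFc := FT_continuous φ hφ_smooth.continuous hcs
  obtain ⟨C, hC0, hC⟩ := FT_decay φ hφ_smooth hcs
  obtain ⟨B, hB, hBa⟩ := fcoef_decay a ha_smooth ha_per ha_supp w u hu
  have hHc := HH_continuous w
  have hFb : ∀ ξ, ‖FT φ ξ‖ ≤ C := fun ξ => by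
    refine le_trans ?_ (hC ξ)
    apply le_mul_of_one_le_right (norm_nonneg _)
    exact one_le_pow₀ (by linarith [norm_nonneg ξ])
  constructor
  · intro hne
    have hHne : HH w ξ₀ ≠ 0 := by
      unfold HH
      apply div_ne_zero hne
      unfold LL nrm2
      intro h0
      have h1 : dot2 (toR2 w) (toR2 w) ≤ 0 := Real.sqrt_eq_zero'.1 h0
      have h2 : (toR2 w).1 = 0 := by
        unfold dot2 at h1; nlinarith [sq_nonneg (toR2 w).1, sq_nonneg (toR2 w).2]
      have h3 : (toR2 w).2 = 0 := by
        unfold dot2 at h1; nlinarith [sq_nonneg (toR2 w).1, sq_nonneg (toR2 w).2]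
      apply hne
      simp [dot2, h2, h3]
    obtain ⟨R, hR⟩ := ha_supp
    have := Wcs_tendsto φ x₀ ξ₀ w a C hC0 hC B hB hBa (fun _ => 0) ?_
    · simpa using this
    intro ξ
    apply tendsto_const_nhds.congr'
    have hinv : Tendsto (fun hb => (Real.sqrt hb)⁻¹) (𝓝[>] (0:ℝ)) atTop := by
      apply tendsto_inv_nhdsGT_zero.comp
      rw [tendsto_nhdsWithin_iff]
      refine ⟨sqrt_tendsto, ?_⟩
      filter_upwards [self_mem_nhdsWithin] with hb h using Real.sqrt_pos.2 h
    have h1 : Tendsto (fun hb => |2 * π * HH w ξ₀| * (Real.sqrt hb)⁻¹) (𝓝[>] (0:ℝ)) atTop :=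
      hinv.const_mul_atTop (abs_pos.2 (by positivity))
    have h2 : Tendsto (fun hb => |2 * π * HH w (zt ξ₀ hb ξ)|) (𝓝[>] (0:ℝ))
        (𝓝 |2 * π * HH w ξ|) :=
      (((hHc.tendsto ξ).comp (zt_tendsto ξ₀ ξ)).const_mul (2 * π)).abs
    have h3 := h1.atTop_add h2.neg
    filter_upwards [h3.eventually_ge_atTop R, self_mem_nhdsWithin] with hb hge hpos
    have hη : R ≤ |2 * π * HH w (zt ξ₀ hb ξ) + 2 * π * HH w ξ₀ * (Real.sqrt hb)⁻¹| := by
      refine hge.trans ?_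
      have h4 := abs_sub_abs_le_abs_sub (2 * π * HH w ξ₀ * (Real.sqrt hb)⁻¹)
        (-(2 * π * HH w (zt ξ₀ hb ξ)))
      have h5 : |2 * π * HH w ξ₀ * (Real.sqrt hb)⁻¹| = |2 * π * HH w ξ₀| * (Real.sqrt hb)⁻¹ := by
        rw [abs_mul, abs_of_nonneg (inv_nonneg.2 (Real.sqrt_nonneg hb))]
      rw [h5, abs_neg, sub_neg_eq_add] at h4
      rw [add_comm (2 * π * HH w (zt ξ₀ hb ξ))]
      linarith
    have : ∀ c : ℤ, fcoef a (c • w)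
        (2 * π * HH w (zt ξ₀ hb ξ) + 2 * π * HH w ξ₀ * (Real.sqrt hb)⁻¹) = 0 := by
      intro c
      simp [fcoef, torusInt, hR _ _ hη]
    simp only [Gs, this, zero_mul, mul_zero, tsum_zero]
  · intro h0
    have hH0 : HH w ξ₀ = 0 := by unfold HH; rw [h0, zero_div]
    apply Wcs_tendsto φ x₀ ξ₀ w a C hC0 hC B hB hBa
    intro ξ
    have hcx : ∀ η, Continuous fun x => a x η := fun η =>
      ha_smooth.continuous.comp (f := fun x => (x, η)) (by fun_prop)
    have hsumI := hasSum_IΛ a (2 * π * HH w ξ) (hcx _) (fun x j => ha_per x _ j) w u hu x₀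
      (Summable.of_nonneg_of_le (fun _ => norm_nonneg _) (fun c => hBa c _) hB)
    have hg : ((‖FT φ ξ‖ ^ 2 : ℝ) : ℂ) * IΛ w a x₀ (2 * π * HH w ξ) =
        ∑' c : ℤ, (starRingEnd ℂ) (FT φ ξ) * FT φ ξ *
          (fcoef a (c • w) (2 * π * HH w ξ) * expI (2 * π * (c * dot2 (toR2 w) x₀))) := by
      rw [tsum_mul_left, hsumI.tsum_eq, Complex.conj_mul']
      push_cast
      rfl
    rw [hg]
    simp only [hH0, mul_zero, zero_mul, add_zero]
    apply tendsto_tsum_of_dominated_convergence (bound := fun c => C * C * B c) (hB.mul_left _)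
    · intro c
      unfold Gs
      have hfc : Continuous (fun η => fcoef a (c • w) η) := by
        unfold fcoef torusInt
        apply continuous_parametric_integral_of_continuous _ isCompact_Icc
        have hE := continuous_expI
        unfold Function.uncurry dot2
        apply Continuous.mul
        · exact ha_smooth.continuous.comp (f := fun p : ℝ × (ℝ × ℝ) => (p.2, p.1)) (by fun_prop)
        · fun_prop
      have hz := zt_tendsto ξ₀ ξ
      have t1 : Tendsto (fun hb => FT φ (zt ξ₀ hb ξ)) (𝓝[>] (0:ℝ)) (𝓝 (FT φ ξ)) :=
        (hFc.tendsto ξ).comp hz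
      have t2 : Tendsto (fun hb => FT φ (zt ξ₀ hb ξ - (Real.sqrt hb * c) • toR2 w))
          (𝓝[>] (0:ℝ)) (𝓝 (FT φ ξ)) := by
        apply (hFc.tendsto ξ).comp
        have := hz.sub ((sqrt_tendsto.mul_const (c:ℝ)).smul_const (toR2 w))
        simpa using this
      have t3 : Tendsto (fun hb => fcoef a (c • w) (2 * π * HH w (zt ξ₀ hb ξ)))
          (𝓝[>] (0:ℝ)) (𝓝 (fcoef a (c • w) (2 * π * HH w ξ))) :=
        (hfc.tendsto _).comp (((hHc.tendsto ξ).comp hz).const_mul (2 * π))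
      exact (((Complex.continuous_conj.tendsto _).comp t1).mul t2).mul (t3.mul_const _)
    · refine Eventually.of_forall fun hb c => ?_
      unfold Gs
      rw [norm_mul, norm_mul, norm_mul, norm_expI, mul_one, RCLike.norm_conj]
      gcongr
      · exact hFb _
      · exact hFb _
      · exact hBa c _
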